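/- Hard instances lie in Collection: For all positive integers m and n ≥ 2, all x ∈ ({0,1}^n)^m, k ∈ {2,…,n}^m, and d ∈ {0,1}^m, the word w(x,k,d) ∈ RD(m,n) belongs to Collection({0,…,3mn}): every inserted value is extracted exactly once, every extraction extracts a currently present value, and the final multiset is empty. -/

import Mathlib

/-!
Running a block of insertions adds the block's values to the current multiset, and running a
block of extractions of values that are present subtracts them; neither effect depends on the
order inside the block. As `k i ≤ n`, the values inserted by the `i`-th motif are those it
extracts together with `v_{i,j}` for `k i ≤ j ≤ n`, so the motif adds exactly these `v_{i,j}` to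
the multiset (`collectionOK_motif`). After all motifs the multiset is therefore that of the
leftovers (`collectionOK_motifs`), which the last block extracts.

For the size bound, `n * i ≤ n * m`, `1 ≤ j` and `2 ≤ k i` give `v_{i,j} ≤ 3 * (m * n - 1) + 2`
and `a_i ≤ 3 * (m * n - 2) + 4`. The truncated subtractions are genuine, as `j, k i ≤ n ≤ n * i`.
-/


/-- A letter of the alphabet `Σ = {ins(a), ext(a)}`. -/
inductive Letter where
  | ins : ℕ → Letter
  | ext : ℕ → Letter
deriving DecidableEq

/-- The value carried by a letter. -/
def Letter.value : Letter → ℕ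
  | .ins a => a
  | .ext a => a

/-- `CollectionOK M w`: starting from multiset `M`, every extraction in `w` extracts a
currently present value and the final multiset is empty (so every inserted value is
extracted exactly once). `CollectionOK 0 w` means `w ∈ Collection`. -/
def CollectionOK : Multiset ℕ → List Letter → Prop
  | M, [] => M = 0
  | M, .ins a :: w => CollectionOK (a ::ₘ M) w
  | M, .ext a :: w => a ∈ M ∧ CollectionOK (M.erase a) w

/-- `0/1`-value of a Boolean. -/
def bval (b : Bool) : ℕ := if b then 1 else 0

/-- The value `v_{i,j} = 3(ni − j) + 2·x_i[j]` (indices `1 ≤ i ≤ m`, `1 ≤ j ≤ n`). -/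
def vVal (n : ℕ) (x : ℕ → ℕ → Bool) (i j : ℕ) : ℕ := 3 * (n * i - j) + 2 * bval (x i j)

/-- The value `a_i = 3(ni − k_i) + 1 + 3·d_i`. -/
def aVal (n : ℕ) (k : ℕ → ℕ) (d : ℕ → Bool) (i : ℕ) : ℕ :=
  3 * (n * i - k i) + 1 + 3 * bval (d i)

/-- Sort a list of naturals in decreasing order. -/
def sortDesc (l : List ℕ) : List ℕ := l.mergeSort fun a b => decide (b ≤ a)

/-- The `i`-th motif: insert `v_{i,1},…,v_{i,n}`, insert `a_i`, then extract the `k_i`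
values `{v_{i,1},…,v_{i,k_i−1}, a_i}` in decreasing order. -/
def motif (n : ℕ) (x : ℕ → ℕ → Bool) (k : ℕ → ℕ) (d : ℕ → Bool) (i : ℕ) : List Letter :=
  ((List.range n).map fun j => Letter.ins (vVal n x i (j + 1))) ++
    [Letter.ins (aVal n k d i)] ++
    (sortDesc (((List.range (k i - 1)).map fun j => vVal n x i (j + 1)) ++
      [aVal n k d i])).map Letter.ext

/-- The values left after all motifs: `v_{i,j}` for `1 ≤ i ≤ m` and `k_i ≤ j ≤ n`. -/
def leftovers (m n : ℕ) (x : ℕ → ℕ → Bool) (k : ℕ → ℕ) : List ℕ :=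
  (List.range m).flatMap fun i' =>
    (List.range (n + 1 - k (i' + 1))).map fun t => vVal n x (i' + 1) (k (i' + 1) + t)

/-- The hard instance `w(x,k,d) ∈ RD(m,n)`: the `m` motifs followed by the extraction of
everything left, in decreasing order. -/
def hardWord (m n : ℕ) (x : ℕ → ℕ → Bool) (k : ℕ → ℕ) (d : ℕ → Bool) : List Letter :=
  ((List.range m).flatMap fun i' => motif n x k d (i' + 1)) ++
    (sortDesc (leftovers m n x k)).map Letter.ext

theorem sortDesc_perm (l : List ℕ) : (sortDesc l).Perm l :=
  List.mergeSort_perm l _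

theorem collectionOK_ins (l : List ℕ) (M : Multiset ℕ) (w : List Letter)
    (h : CollectionOK ((l : Multiset ℕ) + M) w) :
    CollectionOK M (l.map Letter.ins ++ w) := by
  induction l generalizing M with
  | nil => simpa using h
  | cons a l ih =>
    simp only [List.map_cons, List.cons_append, CollectionOK]
    apply ih
    rwa [Multiset.add_cons, ← Multiset.cons_add, Multiset.cons_coe]

theorem collectionOK_ext (l : List ℕ) (M : Multiset ℕ) (w : List Letter)
    (h : CollectionOK M w) :
    CollectionOK ((l : Multiset ℕ) + M) (l.map Letter.ext ++ w) := by
  induction l with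
  | nil => simpa using h
  | cons a l ih =>
    rw [← Multiset.cons_coe, Multiset.cons_add]
    simpa only [List.map_cons, List.cons_append, CollectionOK, Multiset.mem_cons_self,
      Multiset.erase_cons_head, true_and] using ih

theorem collectionOK_sortDesc (l : List ℕ) (M : Multiset ℕ) (w : List Letter)
    (h : CollectionOK M w) :
    CollectionOK ((l : Multiset ℕ) + M) ((sortDesc l).map Letter.ext ++ w) := by
  rw [← Multiset.coe_eq_coe.2 (sortDesc_perm l)]
  exact collectionOK_ext _ _ _ h

/-- The values `v_{i,j}`, `k i ≤ j ≤ n`, that the `i`-th motif inserts but does not extract. -/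
def rest (n : ℕ) (x : ℕ → ℕ → Bool) (k : ℕ → ℕ) (i : ℕ) : List ℕ :=
  (List.range (n + 1 - k i)).map fun t => vVal n x i (k i + t)

theorem range_split (n : ℕ) (x : ℕ → ℕ → Bool) (k : ℕ → ℕ) (i : ℕ)
    (h1 : 1 ≤ k i) (h2 : k i ≤ n) :
    (List.range n).map (fun j => vVal n x i (j + 1)) =
      (List.range (k i - 1)).map (fun j => vVal n x i (j + 1)) ++ rest n x k i := by
  have e : n = (k i - 1) + (n + 1 - k i) := by omega
  conv_lhs => rw [show List.range n = List.range ((k i - 1) + (n + 1 - k i)) by rw [← e]]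
  rw [List.range_add, List.map_append, List.map_map, rest]
  congr 1
  apply List.map_congr_left
  intro t _
  simp only [Function.comp]
  congr 1
  omega

theorem collectionOK_motif (n : ℕ) (x : ℕ → ℕ → Bool) (k : ℕ → ℕ) (d : ℕ → Bool) (i : ℕ)
    (h1 : 1 ≤ k i) (h2 : k i ≤ n) (M : Multiset ℕ) (w : List Letter)
    (h : CollectionOK ((rest n x k i : Multiset ℕ) + M) w) :
    CollectionOK M (motif n x k d i ++ w) := by
  have e : motif n x k d i ++ w =
      ((List.range n).map (fun j => vVal n x i (j + 1)) ++ [aVal n k d i]).map Letter.ins ++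
      ((sortDesc ((List.range (k i - 1)).map (fun j => vVal n x i (j + 1)) ++
        [aVal n k d i])).map Letter.ext ++ w) := by
    simp [motif, Function.comp_def]
  rw [e]
  apply collectionOK_ins
  rw [range_split n x k i h1 h2]
  convert collectionOK_sortDesc _ _ _ h using 1
  simp only [← Multiset.coe_add]
  abel

theorem collectionOK_motifs (n : ℕ) (x : ℕ → ℕ → Bool) (k : ℕ → ℕ) (d : ℕ → Bool)
    (L : List ℕ) (hL : ∀ i ∈ L, 1 ≤ k (i + 1) ∧ k (i + 1) ≤ n)
    (M : Multiset ℕ) (w : List Letter)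
    (h : CollectionOK ((L.flatMap fun i => rest n x k (i + 1) : List ℕ) + M) w) :
    CollectionOK M ((L.flatMap fun i => motif n x k d (i + 1)) ++ w) := by
  induction L generalizing M with
  | nil => simpa using h
  | cons i L ih =>
    rw [List.flatMap_cons, List.append_assoc]
    have hi := hL i (by simp)
    apply collectionOK_motif n x k d (i + 1) hi.1 hi.2
    apply ih (fun j hj => hL j (by simp [hj]))
    convert h using 1
    rw [List.flatMap_cons, ← Multiset.coe_add]
    abel

theorem bval_le (b : Bool) : bval b ≤ 1 := by
  cases b <;> simp [bval]

theorem vVal_le {m n i j : ℕ} (x : ℕ → ℕ → Bool) (hi1 : 1 ≤ i) (hi : i ≤ m)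
    (hj1 : 1 ≤ j) (hj : j ≤ n) : vVal n x i j ≤ 3 * m * n := by
  have hb := bval_le (x i j)
  have h1 : n * i ≤ n * m := Nat.mul_le_mul_left n hi
  have h2 : n * 1 ≤ n * i := Nat.mul_le_mul_left n hi1
  have h3 : 3 * m * n = 3 * (n * m) := by ring
  unfold vVal
  omega

theorem aVal_le {m n i : ℕ} (k : ℕ → ℕ) (d : ℕ → Bool) (hi1 : 1 ≤ i) (hi : i ≤ m)
    (hk2 : 2 ≤ k i) (hk : k i ≤ n) : aVal n k d i ≤ 3 * m * n := by
  have hb := bval_le (d i)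
  have h1 : n * i ≤ n * m := Nat.mul_le_mul_left n hi
  have h2 : n * 1 ≤ n * i := Nat.mul_le_mul_left n hi1
  have h3 : 3 * m * n = 3 * (n * m) := by ring
  unfold aVal
  omega

/-- Hard instances lie in `Collection({0,…,3mn})`. -/
theorem hardWord_mem_collection (m n : ℕ) (hm : 0 < m) (hn : 2 ≤ n)
    (x : ℕ → ℕ → Bool) (k : ℕ → ℕ) (d : ℕ → Bool)
    (hk : ∀ i, 1 ≤ i → i ≤ m → 2 ≤ k i ∧ k i ≤ n) :
    (∀ l ∈ hardWord m n x k d, l.value ≤ 3 * m * n) ∧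
      CollectionOK 0 (hardWord m n x k d) := by
  constructor
  · intro l hl
    rw [hardWord, List.mem_append] at hl
    rcases hl with hl | hl
    · obtain ⟨i, hi, hl⟩ := List.mem_flatMap.1 hl
      rw [List.mem_range] at hi
      obtain ⟨k2, kn⟩ := hk (i + 1) (by omega) (by omega)
      have ha := aVal_le (m := m) k d (by omega : 1 ≤ i + 1) (by omega) k2 kn
      rw [motif, List.mem_append, List.mem_append] at hl
      rcases hl with (hl | hl) | hl
      · obtain ⟨j, hj, rfl⟩ := List.mem_map.1 hl
        rw [List.mem_range] at hj
        exact vVal_le x (by omega) (by omega) (by omega) (by omega)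
      · rw [List.mem_singleton.1 hl]
        exact ha
      · obtain ⟨v, hv, rfl⟩ := List.mem_map.1 hl
        rw [(sortDesc_perm _).mem_iff, List.mem_append] at hv
        rcases hv with hv | hv
        · obtain ⟨j, hj, rfl⟩ := List.mem_map.1 hv
          rw [List.mem_range] at hj
          exact vVal_le x (by omega) (by omega) (by omega) (by omega)
        · rw [List.mem_singleton.1 hv]
          exact ha
    · obtain ⟨v, hv, rfl⟩ := List.mem_map.1 hl
      rw [(sortDesc_perm _).mem_iff] at hv
      obtain ⟨i, hi, hv⟩ := List.mem_flatMap.1 hv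
      rw [List.mem_range] at hi
      obtain ⟨k2, kn⟩ := hk (i + 1) (by omega) (by omega)
      obtain ⟨t, ht, rfl⟩ := List.mem_map.1 hv
      rw [List.mem_range] at ht
      exact vVal_le x (by omega) (by omega) (by omega) (by omega)
  · apply collectionOK_motifs
    · intro i hi
      rw [List.mem_range] at hi
      obtain ⟨k2, kn⟩ := hk (i + 1) (by omega) (by omega)
      exact ⟨by omega, kn⟩
    · have h := collectionOK_sortDesc (leftovers m n x k) 0 [] rfl
      rw [List.append_nil] at h
      exact h
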